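/- If P is a three-valued mem-basic form over A and a ∈ α̃(P), then CP_cl^U ⊢ P = ℓ_a(P) ◁ a ▷ r_a(P). -/

import Mathlib

/-!
The claim generalizes to `shaAux P x` for an arbitrary set `x` and follows by induction on `P`.
At a leaf, only `U` has a nonempty `shaAux`, and `U = U ◁ a ▷ U` because (CP-U) rewrites both
branches as conditionals on `U`, which (CL2) pulls out of the conditional on `a`.
At a node `P ◁ b ▷ Q` with `b ≠ a`, the induction hypotheses put `a` at the root of both branches,
and (CL2) exchanges `b` and `a`.
-/

/-- Three-valued conditional expressions over a set `A` of atoms: constants T, F, U,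
atoms, and the ternary conditional `cond P Q R` read `P ◁ Q ▷ R` ("if Q then P else R"). -/
inductive ExprU (A : Type) : Type
  | T : ExprU A
  | F : ExprU A
  | U : ExprU A
  | atom : A → ExprU A
  | cond : ExprU A → ExprU A → ExprU A → ExprU A

namespace ExprU

/-- Derivability from the axiom system CP_cl^U = CP + (CPmem) + (CL2) + (CP-U). -/
inductive DerClU {A : Type} : ExprU A → ExprU A → Prop
  | refl (P : ExprU A) : DerClU P P
  | symm {P Q : ExprU A} : DerClU P Q → DerClU Q P
  | trans {P Q R : ExprU A} : DerClU P Q → DerClU Q R → DerClU P R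
  | congr {P P' Q Q' R R' : ExprU A} :
      DerClU P P' → DerClU Q Q' → DerClU R R' →
      DerClU (cond P Q R) (cond P' Q' R')
  | cp1 (x y : ExprU A) : DerClU (cond x T y) x
  | cp2 (x y : ExprU A) : DerClU (cond x F y) y
  | cp3 (x : ExprU A) : DerClU (cond T x F) x
  | cp4 (x y z u v : ExprU A) :
      DerClU (cond x (cond y z u) v) (cond (cond x y v) z (cond x u v))
  | cpmem (x y z u v w : ExprU A) :
      DerClU (cond x y (cond z u (cond v y w))) (cond x y (cond z u w))
  | cl2 (x y z u v w : ExprU A) :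
      DerClU (cond (cond x y z) u (cond v y w)) (cond (cond x u v) y (cond z u w))
  | cpu (x y : ExprU A) : DerClU (cond x U y) U

/-- The set α(P) of atoms occurring in a conditional expression. -/
def atoms {A : Type} [DecidableEq A] : ExprU A → Finset A
  | T => ∅
  | F => ∅
  | U => ∅
  | atom a => {a}
  | cond P Q R => atoms P ∪ atoms Q ∪ atoms R

/-- Three-valued mem-basic forms. -/
inductive IsMBF {A : Type} [DecidableEq A] : ExprU A → Prop
  | T : IsMBF T
  | F : IsMBF F
  | U : IsMBF U
  | cond {P Q : ExprU A} (a : A) : IsMBF P → IsMBF Q →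
      a ∉ atoms P → a ∉ atoms Q → IsMBF (cond P (atom a) Q)

/-- The auxiliary function f for the three-valued shared alphabet:
f(U, x) = x, f(T, x) = f(F, x) = ∅,
f(P₁ ◁ a ▷ P₂, x) = {a} ∪ (f(P₁, x \ {a}) ∩ f(P₂, x \ {a})). -/
def shaAux {A : Type} [DecidableEq A] : ExprU A → Finset A → Finset A
  | cond P (atom a) Q, x => insert a (shaAux P (x.erase a) ∩ shaAux Q (x.erase a))
  | U, x => x
  | _, _ => ∅

/-- The shared alphabet α̃(P) = f(P, α(P)) of a three-valued mem-basic form. -/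
def sha {A : Type} [DecidableEq A] (P : ExprU A) : Finset A :=
  shaAux P (atoms P)

/-- Left a-reduction ℓ_a on basic forms. -/
def lred {A : Type} [DecidableEq A] (a : A) : ExprU A → ExprU A
  | cond P (atom b) Q => if b = a then P else cond (lred a P) (atom b) (lred a Q)
  | e => e

/-- Right a-reduction r_a on basic forms. -/
def rred {A : Type} [DecidableEq A] (a : A) : ExprU A → ExprU A
  | cond P (atom b) Q => if b = a then Q else cond (rred a P) (atom b) (rred a Q)
  | e => e

/-- `Fseq σ P` is the basic form F_σ(P_0, …, P_{2^{|σ|}−1}):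
F_ε(P_0) = P_0 and F_{aρ}(P_0,…) = F_ρ(P_0,…,P_{2^{|ρ|}−1}) ◁ a ▷ F_ρ(P_{2^{|ρ|}},…). -/
def Fseq {A : Type} : (σ : List A) → (Fin (2 ^ σ.length) → ExprU A) → ExprU A
  | [], P => P ⟨0, by positivity⟩
  | a :: ρ, P =>
      cond (Fseq ρ (fun i => P ⟨i.1, by have := i.2; simp [Nat.pow_succ]; omega⟩))
        (atom a)
        (Fseq ρ (fun i => P ⟨2 ^ ρ.length + i.1, by have := i.2; simp [Nat.pow_succ]; omega⟩))

end ExprU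

namespace ExprU

/-- The undefined constant absorbs any condition: `U = U ◁ y ▷ U`. -/
theorem derClU_U_cond {A : Type} (y : ExprU A) : DerClU U (cond U y U) := by
  have h₁ : DerClU (cond (cond T U T) y (cond T U T)) (cond U y U) :=
    .congr (.cpu T T) (.refl y) (.cpu T T)
  have h₂ : DerClU (cond (cond T U T) y (cond T U T)) U :=
    .trans (.cl2 ..) (.cpu ..)
  exact h₂.symm.trans h₁

theorem derClU_of_mem_shaAux {A : Type} [DecidableEq A] {P : ExprU A} {a : A}
    (hP : IsMBF P) (x : Finset A) (ha : a ∈ shaAux P x) :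
    DerClU P (cond (lred a P) (atom a) (rred a P)) := by
  induction hP generalizing x with
  | T => simp [shaAux] at ha
  | F => simp [shaAux] at ha
  | U => exact derClU_U_cond _
  | @cond P Q b _ _ _ _ ihP ihQ =>
    by_cases hba : b = a
    · subst hba
      simpa [lred, rred] using DerClU.refl (cond P (atom b) Q)
    · simp only [shaAux, Finset.mem_insert, Finset.mem_inter, Ne.symm hba, false_or] at ha
      simp only [lred, rred, if_neg hba]
      exact .trans (.congr (ihP _ ha.1) (.refl _) (ihQ _ ha.2)) (.cl2 ..)

end ExprU

open ExprU in
/-- If P is a three-valued mem-basic form over A and a ∈ α̃(P),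
then CP_cl^U ⊢ P = ℓ_a(P) ◁ a ▷ r_a(P). -/
theorem stmt_7 {A : Type} [DecidableEq A] (P : ExprU A) (a : A)
    (hP : IsMBF P) (ha : a ∈ sha P) :
    DerClU P (ExprU.cond (lred a P) (ExprU.atom a) (rred a P)) := by
  exact derClU_of_mem_shaAux hP _ ha
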